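/- arXiv:1811.12657 — 3 statements merged into one kernel-verified Lean document; each statement's English description precedes it below -/
import Mathlib

section
/- Let S be any schedule that respects the index order. Then for every job j, if C_j(S) ∈ P then C_j(S) is a split point of S. Consequently, if 0 = τ_1 < … < τ_ℓ = D is the list of all split points of S and R_x = [τ_x, τ_{x+1}) is a region, then no job j with start time S_j ∈ R_x has completion time C_j(S) ∈ P ∩ (τ_x, τ_{x+1}). -/
open Finset

/-- A schedule: assigns to each unit time slot `[t,t+1)` at most one job;
each job `j` receives exactly `p j` slots, and no slot at or beyond the horizon `D` is used. -/
structure Schedule (n : ℕ) (p : Fin n → ℕ) (D : ℕ) where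
  assign : ℕ → Option (Fin n)
  card_slots : ∀ j : Fin n,
    ((Finset.range D).filter (fun t => assign t = some j)).card = p j
  beyond : ∀ t, D ≤ t → assign t = none

variable {n D : ℕ} {p : Fin n → ℕ}

/-- The set of time slots assigned to job `j`. -/
def jobSlots (S : Schedule n p D) (j : Fin n) : Finset ℕ :=
  (Finset.range D).filter (fun t => S.assign t = some j)

/-- The start time of job `j`: the least `t` with `S.assign t = some j`. -/
noncomputable def startTime (S : Schedule n p D) (j : Fin n) : ℕ :=
  sInf {t | S.assign t = some j}

/-- The completion time of job `j`: one plus the greatest `t` with `S.assign t = some j`. -/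
def completion (S : Schedule n p D) (j : Fin n) : ℕ :=
  (jobSlots S j).sup id + 1

/-- The utilization cost of a schedule: total tariff of all utilized slots. -/
def ucost (e : ℕ → ℚ) (S : Schedule n p D) : ℚ :=
  ∑ t ∈ (Finset.range D).filter (fun t => S.assign t ≠ none), e t

/-- The weighted total cost: `∑_j w_j C_j(S) + E(S)`. -/
def wcost (w : Fin n → ℚ) (e : ℕ → ℚ) (S : Schedule n p D) : ℚ :=
  (∑ j : Fin n, w j * (completion S j : ℚ)) + ucost e S

/-- `S` processes jobs in the order of their indices: every slot of a smaller-indexed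
job precedes every slot of a larger-indexed job. -/
def RespectsOrder (S : Schedule n p D) : Prop :=
  ∀ j k : Fin n, j < k → ∀ t t', S.assign t = some j → S.assign t' = some k → t < t'

/-- The tie-breaking value `∑_{t utilized} t`. -/
def tieVal (S : Schedule n p D) : ℕ :=
  ∑ t ∈ (Finset.range D).filter (fun t => S.assign t ≠ none), t

/-- Membership in the set `P = (⋃_k {s_k, s_k+1}) ∪ {D}` of potential split points,
for boundaries `σ : Fin (K+1) → ℕ` (0-based: interval `k` is `[σ k.castSucc, σ k.succ)`). -/
def inP (K : ℕ) (σ : Fin (K+1) → ℕ) (D t : ℕ) : Prop :=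
  (∃ k : Fin K, t = σ k.castSucc ∨ t = σ k.castSucc + 1) ∨ t = D

/-- `t` is a split point of `S`: `t ∈ P` and every job starting before `t` completes by `t`. -/
def IsSplit (K : ℕ) (σ : Fin (K+1) → ℕ) (S : Schedule n p D) (t : ℕ) : Prop :=
  inP K σ D t ∧ ∀ j : Fin n, startTime S j < t ↔ completion S j ≤ t

/-- `e_max^j`: the maximum tariff among the slots assigned to job `j`. -/
def emax (e : ℕ → ℚ) (S : Schedule n p D) (j : Fin n) : ℚ :=
  WithBot.unbotD 0 (((jobSlots S j).image e).max)

/-- The quantity `e_max^j + ∑_{j' < j} w_{j'}` whose maximum over a region defines `Δ_x`. -/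
def dval (w : Fin n → ℚ) (e : ℕ → ℚ) (S : Schedule n p D) (j : Fin n) : ℚ :=
  emax e S j + ∑ j' ∈ Finset.univ.filter (fun j' => j' < j), w j'

/-! In an index-ordered schedule job `j` completes before any later job starts. Hence at time
`C_j` the jobs already started and the jobs already completed are both exactly `{k | k ≤ j}`. -/

section

variable {S : Schedule n p D} {j k : Fin n} {t : ℕ}

theorem mem_jobSlots : t ∈ jobSlots S j ↔ S.assign t = some j := by
  refine ⟨fun ht => (mem_filter.mp ht).2, fun ht => mem_filter.mpr ⟨mem_range.mpr ?_, ht⟩⟩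
  by_contra! hDt
  exact Option.some_ne_none j (ht.symm.trans (S.beyond t hDt))

theorem jobSlots_nonempty (hj : 0 < p j) : (jobSlots S j).Nonempty :=
  card_pos.mp (hj.trans_eq (S.card_slots j).symm)

theorem assign_startTime (hj : 0 < p j) : S.assign (startTime S j) = some j :=
  have ⟨t, ht⟩ := jobSlots_nonempty (S := S) hj
  Nat.sInf_mem (s := {t | S.assign t = some j}) ⟨t, mem_jobSlots.mp ht⟩

theorem lt_completion_of_assign_eq_some (ht : S.assign t = some j) : t < completion S j :=
  Nat.lt_succ_of_le (le_sup (f := id) (mem_jobSlots.mpr ht))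

theorem exists_assign_eq_some_and_completion_eq (hj : 0 < p j) :
    ∃ t, S.assign t = some j ∧ completion S j = t + 1 := by
  obtain ⟨t, ht, hsup⟩ := exists_mem_eq_sup (jobSlots S j) (jobSlots_nonempty hj) id
  exact ⟨t, mem_jobSlots.mp ht, congrArg (· + 1) hsup⟩

theorem startTime_lt_completion (hj : 0 < p j) : startTime S j < completion S j :=
  lt_completion_of_assign_eq_some (assign_startTime hj)

namespace RespectsOrder

theorem completion_le_startTime (hord : RespectsOrder S) (hj : 0 < p j) (hk : 0 < p k)
    (hjk : j < k) : completion S j ≤ startTime S k := by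
  obtain ⟨t, ht, hcompletion⟩ := exists_assign_eq_some_and_completion_eq (S := S) hj
  rw [hcompletion]
  exact hord j k hjk t (startTime S k) ht (assign_startTime hk)

theorem strictMono_completion (hord : RespectsOrder S) (hp : ∀ j, 0 < p j) :
    StrictMono (completion S) := fun j k hjk =>
  (hord.completion_le_startTime (hp j) (hp k) hjk).trans_lt (startTime_lt_completion (hp k))

theorem startTime_lt_completion_iff (hord : RespectsOrder S) (hp : ∀ j, 0 < p j) :
    startTime S k < completion S j ↔ k ≤ j := by
  refine ⟨fun hlt => ?_, fun hkj => ?_⟩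
  · by_contra! hjk
    exact hlt.not_ge (hord.completion_le_startTime (hp j) (hp k) hjk)
  · exact (startTime_lt_completion (hp k)).trans_le ((hord.strictMono_completion hp).monotone hkj)

end RespectsOrder

theorem completion_in_P_is_split_general {K : ℕ} {σ : Fin (K + 1) → ℕ} (hp : ∀ j, 0 < p j)
    (hord : RespectsOrder S) (hj : inP K σ D (completion S j)) :
    IsSplit K σ S (completion S j) := by
  refine ⟨hj, fun k => ?_⟩
  calc startTime S k < completion S j
      ↔ k ≤ j := hord.startTime_lt_completion_iff hp
    _ ↔ completion S k ≤ completion S j := (hord.strictMono_completion hp).le_iff_le.symm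

end

/-- In any index-order-respecting schedule, a completion time lying in `P` is a split
point; consequently no job starting in a region completes at a point of `P` strictly
inside that region. -/
theorem completion_in_P_is_split (n : ℕ) (p : Fin n → ℕ) (hp : ∀ j, 1 ≤ p j)
    (w : Fin n → ℚ) (hw : ∀ j, 0 ≤ w j)
    (e : ℕ → ℚ) (he : ∀ t, 0 ≤ e t) (D : ℕ) (hD : ∑ j, p j ≤ D)
    (K : ℕ) (σ : Fin (K+1) → ℕ) (hσ0 : σ 0 = 0) (hσD : σ (Fin.last K) = D)
    (hmono : StrictMono σ) (ec : Fin K → ℚ)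
    (hconst : ∀ k : Fin K, ∀ t, σ k.castSucc ≤ t → t < σ k.succ → e t = ec k)
    (S : Schedule n p D) (hord : RespectsOrder S) :
    (∀ j : Fin n, inP K σ D (completion S j) → IsSplit K σ S (completion S j)) ∧
    (∀ a b : ℕ, IsSplit K σ S a → IsSplit K σ S b → a < b →
      (∀ t, a < t → t < b → ¬ IsSplit K σ S t) →
      ∀ j : Fin n, a ≤ startTime S j → startTime S j < b →
        ¬ (inP K σ D (completion S j) ∧ a < completion S j ∧ completion S j < b)) :=
  ⟨fun _ => completion_in_P_is_split_general hp hord,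
    fun _ _ _ _ _ hconsecutive _ _ _ ⟨hP, ha, hb⟩ =>
      hconsecutive _ ha hb (completion_in_P_is_split_general hp hord hP)⟩
end

section
/- Let S* be a canonical optimal schedule for the index order. Then for every region R_x = [τ_x, τ_{x+1}) of S*, there is at most one index k ∈ {1,…,K} such that the interval I_k contains, within R_x, both a utilized and an unutilized slot (i.e., at most one interval is partially utilized in R_x). -/
open Finset

variable {n D : ℕ} {p : Fin n → ℕ}

/-- `I_k` is partially utilized within the region `[a, b)`: it contains, within the
region, both a utilized and an unutilized slot. -/
def PartiallyIn {n D : ℕ} {p : Fin n → ℕ} (K : ℕ) (σ : Fin (K+1) → ℕ)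
    (S : Schedule n p D) (a b : ℕ) (k : Fin K) : Prop :=
  (∃ t, σ k.castSucc ≤ t ∧ t < σ k.succ ∧ a ≤ t ∧ t < b ∧ S.assign t ≠ none) ∧
  (∃ t, σ k.castSucc ≤ t ∧ t < σ k.succ ∧ a ≤ t ∧ t < b ∧ S.assign t = none)

/-!
Any order-respecting schedule can be re-timed onto any other set of equally many slots, in exactly
one way that keeps the job sequence. Exchanging a utilized slot for an earlier idle one delays no
job and improves the tie-breaker, so in a canonical optimal schedule it must strictly increase the
tariff. Hence within an interval all utilized slots precede all idle ones, and a block of utilized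
slots preceded by an idle slot starts at a boundary.

Suppose two intervals are partially utilized in one region, with last utilized slots `x < y`, so
that `x + 1` and `y + 1` are idle slots of the respective intervals. Compare the exchange `y ↦ x + 1`
with the exchange `x ↦ y + 1`. If a job completed between `x` and `y` just before an idle slot, the
start of the next block would be a split point; if its last slot followed an idle slot, the end of
that last slot would be one. Neither exists inside a region, so the two exchanges shift each
completion time between `x` and `y` by exactly `-1` and `+1`. The two cost changes therefore add up
to zero, although the first is positive and the second nonnegative.
-/

lemma card_insert_erase_of_notMem {ι : Type*} [DecidableEq ι] {U : Finset ι} {x y : ι}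
    (hy : y ∈ U) (hx : x ∉ U) : #(insert x (U.erase y)) = #U := by
  rw [card_insert_of_notMem (notMem_mono (erase_subset y U) hx), card_erase_add_one hy]

lemma sum_insert_erase_add {ι M : Type*} [DecidableEq ι] [AddCommMonoid M] {U : Finset ι} {x y : ι}
    (g : ι → M) (hy : y ∈ U) (hx : x ∉ U) :
    ∑ t ∈ insert x (U.erase y), g t + g y = ∑ t ∈ U, g t + g x := by
  rw [sum_insert (notMem_mono (erase_subset y U) hx), ← sum_erase_add _ _ hy]
  ac_rfl

section RankMap

/-- The order-preserving correspondence between two sets of slots: the `i`-th smallest element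
of `U` is sent to the `i`-th smallest element of `V`. It is meaningful only at elements of `U`, and
if `V` has at least as many elements as `U`. -/
noncomputable def rankMap (U V : Finset ℕ) (u : ℕ) : ℕ :=
  Nat.nth (· ∈ V) (Nat.count (· ∈ U) u)

variable {U V : Finset ℕ} {t u v x y : ℕ}

lemma count_lt_card_of_card_le (hUV : #U ≤ #V) (hu : u ∈ U)
    (hV : (Set.ofPred (· ∈ V)).Finite) : Nat.count (· ∈ U) u < #hV.toFinset := by
  have hU : (Set.ofPred (· ∈ U)).Finite := U.finite_toSet
  have hcard_U : #hU.toFinset = #U := congrArg card (by ext; simp)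
  have hcard_V : #hV.toFinset = #V := congrArg card (by ext; simp)
  have := Nat.count_lt_card hU hu
  omega

lemma rankMap_mem (hUV : #U ≤ #V) (hu : u ∈ U) : rankMap U V u ∈ V :=
  Nat.nth_mem (p := (· ∈ V)) _ (count_lt_card_of_card_le hUV hu)

lemma rankMap_lt_rankMap (hUV : #U ≤ #V) (hu : u ∈ U) (hv : v ∈ U) (huv : u < v) :
    rankMap U V u < rankMap U V v :=
  Nat.nth_lt_nth' (Nat.count_strict_mono (p := (· ∈ U)) hu huv) (count_lt_card_of_card_le hUV hv)

lemma rankMap_eq_of_count_eq (ht : t ∈ V)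
    (hcount : Nat.count (· ∈ V) t = Nat.count (· ∈ U) u) : rankMap U V u = t := by
  rw [rankMap, ← hcount]
  exact Nat.nth_count (p := (· ∈ V)) ht

lemma rankMap_rankMap (hUV : #U ≤ #V) (hu : u ∈ U) : rankMap V U (rankMap U V u) = u :=
  rankMap_eq_of_count_eq hu (Nat.count_nth (count_lt_card_of_card_le hUV hu)).symm

lemma count_insert_erase (hy : y ∈ U) (hx : x ∉ U) (t : ℕ) :
    Nat.count (· ∈ insert x (U.erase y)) t + (if y < t then 1 else 0) =
      Nat.count (· ∈ U) t + (if x < t then 1 else 0) := by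
  induction t with
  | zero => simp
  | succ t ih =>
    have hxy : x ≠ y := by rintro rfl; exact hx hy
    rw [Nat.count_succ, Nat.count_succ]
    rcases eq_or_ne t x with rfl | htx <;> rcases eq_or_ne t y with rfl | hty <;> grind

lemma rankMap_insert_erase_le (hy : y ∈ U) (hx : x ∉ U) (hxy : x < y) (hu : u ∈ U) :
    rankMap U (insert x (U.erase y)) u ≤ u := by
  refine Nat.lt_succ_iff.1 (Nat.nth_lt_of_lt_count ?_)
  have hcount := count_insert_erase hy hx (u + 1)
  grind

lemma rankMap_insert_erase_of_lt_or_gt (hy : y ∈ U) (hx : x ∉ U) (hu : u ∈ U)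
    (houtside : u < min x y ∨ max x y < u) : rankMap U (insert x (U.erase y)) u = u := by
  have hcount := count_insert_erase hy hx u
  refine rankMap_eq_of_count_eq ?_ ?_ <;> grind

lemma rankMap_insert_erase_succ (hy : y ∈ U) (hx : x ∉ U) (ht : t ∈ U) (hxt : x < t)
    (hty : t < y) : rankMap U (insert x (U.erase y)) (t + 1) = t := by
  have hcount := count_insert_erase hy hx t
  refine rankMap_eq_of_count_eq ?_ ?_ <;> grind

lemma rankMap_insert_erase_eq_succ (hy : y ∈ U) (hx : x ∉ U) (ht : t ∈ U) (hyt : y ≤ t)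
    (htx : t < x) (hsucc : t + 1 ∈ insert x U) :
    rankMap U (insert x (U.erase y)) t = t + 1 := by
  have hcount := count_insert_erase hy hx (t + 1)
  refine rankMap_eq_of_count_eq ?_ ?_ <;> grind

lemma rankMap_insert_erase_add_rankMap_insert_erase (hxy : x < y) (hx : x ∈ U) (hx' : x + 1 ∉ U)
    (hy : y ∈ U) (hy' : y + 1 ∉ U) (hu : u ∈ U) (hsucc : x ≤ u → u < y → u + 1 ∈ U)
    (hpred : ∀ t, x ≤ t → t < y → u = t + 1 → t ∈ U) :
    rankMap U (insert (x + 1) (U.erase y)) u + rankMap U (insert (y + 1) (U.erase x)) u =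
      2 * u := by
  have hu_ne_x : u ≠ x := by rintro rfl; exact hx' (hsucc le_rfl hxy)
  by_cases hbetween : x < u ∧ u ≤ y
  · obtain ⟨t, rfl⟩ : ∃ t, u = t + 1 := ⟨u - 1, by omega⟩
    have ht := hpred t (by omega) (by omega) rfl
    have hxt : x + 1 < t := by
      have : t ≠ x := by rintro rfl; exact hx' hu
      have : t ≠ x + 1 := by rintro rfl; exact hx' ht
      omega
    have ht_succ : t + 1 + 1 ∈ insert (y + 1) U := by
      rcases hbetween.2.eq_or_lt with rfl | hlt
      · exact mem_insert_self _ _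
      · exact mem_insert_of_mem (hsucc hbetween.1.le hlt)
    rw [rankMap_insert_erase_succ hy hx' ht hxt (by omega),
      rankMap_insert_erase_eq_succ hx hy' hu (by omega) (by omega) ht_succ]
    omega
  · have hu_ne_succ : u ≠ y + 1 := by rintro rfl; exact hy' hu
    rw [rankMap_insert_erase_of_lt_or_gt hy hx' hu (by omega),
      rankMap_insert_erase_of_lt_or_gt hx hy' hu (by omega)]
    omega

end RankMap

namespace Schedule

/-- The utilized slots of a schedule. -/
def utilized (S : Schedule n p D) : Finset ℕ :=
  (range D).filter (fun t => S.assign t ≠ none)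

/-- The last slot assigned to job `j`, so that `completion S j = S.lastSlot j + 1`. -/
def lastSlot (S : Schedule n p D) (j : Fin n) : ℕ :=
  (jobSlots S j).sup id

variable {S : Schedule n p D} {i j : Fin n} {d t u x y : ℕ}

lemma lt_of_assign_ne_none (h : S.assign t ≠ none) : t < D :=
  not_le.1 (mt (S.beyond t) h)

lemma mem_utilized : t ∈ S.utilized ↔ S.assign t ≠ none := by
  simpa [utilized] using lt_of_assign_ne_none

lemma notMem_utilized : t ∉ S.utilized ↔ S.assign t = none := by
  rw [mem_utilized, not_not]

lemma mem_utilized_of_assign (h : S.assign t = some j) : t ∈ S.utilized := by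
  simp [mem_utilized, h]

lemma mem_jobSlots : t ∈ jobSlots S j ↔ S.assign t = some j := by
  simpa [jobSlots] using fun h => lt_of_assign_ne_none (h.trans_ne (Option.some_ne_none j))

lemma le_lastSlot (h : S.assign t = some j) : t ≤ S.lastSlot j :=
  le_sup (f := id) (mem_jobSlots.2 h)

lemma assign_lastSlot (S : Schedule n p D) (hj : 0 < p j) :
    S.assign (S.lastSlot j) = some j := by
  have hne : (jobSlots S j).Nonempty := card_pos.1 ((S.card_slots j).symm ▸ hj)
  obtain ⟨t, ht, hlast⟩ := exists_mem_eq_sup _ hne id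
  rw [lastSlot, hlast]
  exact mem_jobSlots.1 ht

lemma lastSlot_mem_utilized (S : Schedule n p D) (hj : 0 < p j) :
    S.lastSlot j ∈ S.utilized :=
  mem_utilized_of_assign (S.assign_lastSlot hj)

lemma assign_startTime (S : Schedule n p D) (hj : 0 < p j) :
    S.assign (startTime S j) = some j :=
  Nat.sInf_mem (s := {t | S.assign t = some j}) ⟨_, S.assign_lastSlot hj⟩

lemma startTime_lt_iff_of_idle (hp : ∀ j, 0 < p j) (hS : RespectsOrder S)
    (hd : S.lastSlot i < d) (hidle : ∀ u, S.lastSlot i < u → u < d → u ∉ S.utilized)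
    (j : Fin n) : startTime S j < d ↔ completion S j ≤ d := by
  have hstart := S.assign_startTime (hp j)
  have hstart_le := le_lastSlot hstart
  change _ ↔ S.lastSlot j < d
  refine ⟨fun hlt => ?_, hstart_le.trans_lt⟩
  have hstart_le_i : startTime S j ≤ S.lastSlot i := by
    by_contra! hgt
    exact hidle _ hgt hlt (mem_utilized_of_assign hstart)
  rcases lt_trichotomy i j with hij | rfl | hji
  · exact absurd (hS i j hij _ _ (S.assign_lastSlot (hp i)) hstart) hstart_le_i.not_gt
  · exact hd
  · exact (hS j i hji _ _ (S.assign_lastSlot (hp j)) (S.assign_lastSlot (hp i))).trans hd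

section Retime

variable {V : Finset ℕ}

/-- The schedule that processes the same sequence of jobs as `S`, but in the slots `V`. -/
noncomputable def retime (S : Schedule n p D) (V : Finset ℕ) (hV : V ⊆ range D)
    (hcard : #V = #S.utilized) : Schedule n p D where
  assign t := if t ∈ V then S.assign (rankMap V S.utilized t) else none
  card_slots j := by
    rw [← S.card_slots j]
    refine card_nbij' (rankMap V S.utilized) (rankMap S.utilized V) ?_ ?_ ?_ ?_
    · intro t ht
      obtain ⟨_, htj⟩ : t ∈ V ∧ S.assign (rankMap V S.utilized t) = some j := by
        simpa using (mem_filter.1 ht).2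
      exact mem_jobSlots.2 htj
    · intro u hu
      have huj : S.assign u = some j := mem_jobSlots.1 hu
      have huU := mem_utilized_of_assign huj
      have hmem := rankMap_mem hcard.ge huU
      exact mem_filter.2 ⟨hV hmem, by rw [if_pos hmem, rankMap_rankMap hcard.ge huU, huj]⟩
    · intro t ht
      have htV : t ∈ V := by
        by_contra hnot
        simp [hnot] at ht
      exact rankMap_rankMap hcard.le htV
    · intro u hu
      exact rankMap_rankMap hcard.ge (mem_utilized_of_assign (mem_jobSlots.1 hu))
  beyond t ht := if_neg fun h => (mem_range.1 (hV h)).not_ge ht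

variable {hV : V ⊆ range D} {hcard : #V = #S.utilized}

lemma assign_retime_eq_some :
    (S.retime V hV hcard).assign t = some j ↔
      ∃ u, S.assign u = some j ∧ rankMap S.utilized V u = t := by
  simp only [retime, Option.ite_none_right_eq_some]
  constructor
  · rintro ⟨ht, htj⟩
    exact ⟨_, htj, rankMap_rankMap hcard.le ht⟩
  · rintro ⟨u, hu, rfl⟩
    have huU := mem_utilized_of_assign hu
    exact ⟨rankMap_mem hcard.ge huU, by rwa [rankMap_rankMap hcard.ge huU]⟩

lemma utilized_retime : (S.retime V hV hcard).utilized = V := by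
  ext t
  rw [mem_utilized]
  refine ⟨fun h => by_contra fun ht => h (if_neg ht), fun ht => ?_⟩
  simpa [retime, ht] using mem_utilized.1 (rankMap_mem hcard.le ht)

lemma respectsOrder_retime (hS : RespectsOrder S) : RespectsOrder (S.retime V hV hcard) := by
  intro j k hjk t t' ht ht'
  obtain ⟨u, hu, rfl⟩ := assign_retime_eq_some.1 ht
  obtain ⟨v, hv, rfl⟩ := assign_retime_eq_some.1 ht'
  exact rankMap_lt_rankMap hcard.ge (mem_utilized_of_assign hu) (mem_utilized_of_assign hv)
    (hS j k hjk u v hu hv)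

lemma lastSlot_retime (hj : 0 < p j) :
    (S.retime V hV hcard).lastSlot j = rankMap S.utilized V (S.lastSlot j) := by
  have hlast := S.assign_lastSlot hj
  refine le_antisymm ?_ (le_lastSlot (assign_retime_eq_some.2 ⟨_, hlast, rfl⟩))
  obtain ⟨u, hu, hu_eq⟩ :=
    assign_retime_eq_some.1 ((S.retime V hV hcard).assign_lastSlot hj)
  rw [← hu_eq]
  rcases (le_lastSlot hu).eq_or_lt with rfl | hlt
  · rfl
  · exact (rankMap_lt_rankMap hcard.ge (mem_utilized_of_assign hu)
      (mem_utilized_of_assign hlast) hlt).le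

end Retime

section Exchange

/-- The schedule that processes the same sequence of jobs as `S`, with the utilized slot `y`
exchanged for the idle slot `x`. -/
noncomputable def exchange (S : Schedule n p D) (y x : ℕ) (hy : y ∈ S.utilized)
    (hx : x ∉ S.utilized) (hxD : x < D) : Schedule n p D :=
  S.retime (insert x (S.utilized.erase y))
    (insert_subset (mem_range.2 hxD) ((erase_subset _ _).trans (filter_subset _ _)))
    (card_insert_erase_of_notMem hy hx)

variable {hy : y ∈ S.utilized} {hx : x ∉ S.utilized} {hxD : x < D}

lemma respectsOrder_exchange (hS : RespectsOrder S) : RespectsOrder (S.exchange y x hy hx hxD) :=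
  respectsOrder_retime hS

lemma completion_exchange (hj : 0 < p j) :
    completion (S.exchange y x hy hx hxD) j =
      rankMap S.utilized (insert x (S.utilized.erase y)) (S.lastSlot j) + 1 :=
  congrArg (· + 1) (lastSlot_retime hj)

lemma completion_exchange_le (hj : 0 < p j) (hxy : x < y) :
    completion (S.exchange y x hy hx hxD) j ≤ completion S j := by
  rw [completion_exchange hj]
  exact Nat.succ_le_succ (rankMap_insert_erase_le hy hx hxy (S.lastSlot_mem_utilized hj))

lemma sum_utilized_exchange {M : Type*} [AddCommMonoid M] (g : ℕ → M) :
    ∑ t ∈ (S.exchange y x hy hx hxD).utilized, g t + g y = ∑ t ∈ S.utilized, g t + g x := by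
  rw [exchange, utilized_retime, sum_insert_erase_add g hy hx]

lemma ucost_exchange (e : ℕ → ℚ) :
    ucost e (S.exchange y x hy hx hxD) + e y = ucost e S + e x :=
  sum_utilized_exchange e

lemma tieVal_exchange_lt (hxy : x < y) : tieVal (S.exchange y x hy hx hxD) < tieVal S := by
  have hsum : tieVal (S.exchange y x hy hx hxD) + y = tieVal S + x :=
    sum_utilized_exchange fun t => t
  omega

end Exchange

lemma completion_exchange_add_completion_exchange (hj : 0 < p j) (hxy : x < y)
    (hx : x ∈ S.utilized) (hx' : x + 1 ∉ S.utilized) (hxD : x + 1 < D)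
    (hy : y ∈ S.utilized) (hy' : y + 1 ∉ S.utilized) (hyD : y + 1 < D)
    (hsucc : x ≤ S.lastSlot j → S.lastSlot j < y → S.lastSlot j + 1 ∈ S.utilized)
    (hpred : ∀ t, x ≤ t → t < y → S.lastSlot j = t + 1 → t ∈ S.utilized) :
    completion (S.exchange y (x + 1) hy hx' hxD) j + completion (S.exchange x (y + 1) hx hy' hyD) j
      = 2 * completion S j := by
  have hsum := rankMap_insert_erase_add_rankMap_insert_erase hxy hx hx' hy hy'
    (S.lastSlot_mem_utilized hj) hsucc hpred
  rw [completion_exchange hj, completion_exchange hj]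
  change _ = 2 * (S.lastSlot j + 1)
  omega

end Schedule

open Schedule

/-- Canonical optimality for the index order: minimum cost among the schedules respecting that
order, with ties broken by the sum of the utilized slots. -/
structure IsCanonicalOptimal (w : Fin n → ℚ) (e : ℕ → ℚ) (S : Schedule n p D) : Prop where
  respectsOrder : RespectsOrder S
  wcost_le : ∀ S' : Schedule n p D, RespectsOrder S' → wcost w e S ≤ wcost w e S'
  tieVal_le : ∀ S' : Schedule n p D, RespectsOrder S' → wcost w e S' = wcost w e S →
    tieVal S ≤ tieVal S'

namespace IsCanonicalOptimal

variable {w : Fin n → ℚ} {e : ℕ → ℚ} {S : Schedule n p D} {x y : ℕ}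

lemma wcost_lt_of_tieVal_lt (hS : IsCanonicalOptimal w e S) {S' : Schedule n p D}
    (hord : RespectsOrder S') (htie : tieVal S' < tieVal S) : wcost w e S < wcost w e S' :=
  (hS.wcost_le S' hord).lt_of_ne fun heq => (hS.tieVal_le S' hord heq.symm).not_gt htie

lemma tariff_lt_of_idle_lt_utilized (hS : IsCanonicalOptimal w e S) (hp : ∀ j, 0 < p j)
    (hw : ∀ j, 0 ≤ w j) (hxy : x < y) (hx : x ∉ S.utilized) (hy : y ∈ S.utilized) :
    e y < e x := by
  have hxD : x < D := hxy.trans (lt_of_assign_ne_none (mem_utilized.1 hy))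
  have hcost := hS.wcost_lt_of_tieVal_lt
    (respectsOrder_exchange (hy := hy) (hx := hx) (hxD := hxD) hS.respectsOrder)
    (tieVal_exchange_lt hxy)
  have hcompletion : ∑ j, w j * (completion (S.exchange y x hy hx hxD) j : ℚ) ≤
      ∑ j, w j * (completion S j : ℚ) :=
    sum_le_sum fun j _ => mul_le_mul_of_nonneg_left
      (by exact_mod_cast completion_exchange_le (hp j) hxy) (hw j)
  have hucost := ucost_exchange (hy := hy) (hx := hx) (hxD := hxD) e
  unfold wcost at hcost
  linarith

lemma tariff_add_lt_of_two_gaps (hS : IsCanonicalOptimal w e S) (hp : ∀ j, 0 < p j)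
    (hxy : x + 1 < y) (hx : x ∈ S.utilized) (hx' : x + 1 ∉ S.utilized)
    (hy : y ∈ S.utilized) (hy' : y + 1 ∉ S.utilized) (hyD : y + 1 < D)
    (hlast_succ : ∀ j, x ≤ S.lastSlot j → S.lastSlot j < y → S.lastSlot j + 1 ∈ S.utilized)
    (hlast_pred : ∀ j t, x ≤ t → t < y → S.lastSlot j = t + 1 → t ∈ S.utilized) :
    e x + e y < e (x + 1) + e (y + 1) := by
  have hxD : x + 1 < D := by omega
  set A := S.exchange y (x + 1) hy hx' hxD
  set B := S.exchange x (y + 1) hx hy' hyD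
  have hcost_A : wcost w e S < wcost w e A :=
    hS.wcost_lt_of_tieVal_lt (respectsOrder_exchange hS.respectsOrder) (tieVal_exchange_lt hxy)
  have hcost_B : wcost w e S ≤ wcost w e B :=
    hS.wcost_le B (respectsOrder_exchange hS.respectsOrder)
  have hcompletion : ∑ j, w j * (completion A j : ℚ) + ∑ j, w j * (completion B j : ℚ) =
      2 * ∑ j, w j * (completion S j : ℚ) := by
    rw [← sum_add_distrib, mul_sum]
    refine sum_congr rfl fun j _ => ?_
    have hj : (completion A j : ℚ) + completion B j = 2 * completion S j := by
      exact_mod_cast completion_exchange_add_completion_exchange (hp j) (by omega) hx hx' hxD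
        hy hy' hyD (hlast_succ j) (hlast_pred j)
    linear_combination w j * hj
  have hucost_A : ucost e A + e y = ucost e S + e (x + 1) := ucost_exchange e
  have hucost_B : ucost e B + e x = ucost e S + e (y + 1) := ucost_exchange e
  unfold wcost at hcost_A hcost_B
  linarith

end IsCanonicalOptimal

lemma exists_next_of_lt {P : ℕ → Prop} {s t : ℕ} (hst : s < t) (ht : P t) :
    ∃ d, s < d ∧ d ≤ t ∧ P d ∧ ∀ u, s < u → u < d → ¬ P u := by
  classical
  have hex : ∃ d, s < d ∧ P d := ⟨t, hst, ht⟩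
  obtain ⟨hlt, hP⟩ := Nat.find_spec hex
  exact ⟨Nat.find hex, hlt, Nat.find_min' hex ⟨hst, ht⟩, hP,
    fun u hsu hu hPu => Nat.find_min hex hu ⟨hsu, hPu⟩⟩

lemma exists_castSucc_le_lt_succ {α : Type*} [LinearOrder α] {K : ℕ} {σ : Fin (K + 1) → α} {t : α}
    (h0 : σ 0 ≤ t) (hlast : t < σ (Fin.last K)) :
    ∃ k : Fin K, σ k.castSucc ≤ t ∧ t < σ k.succ := by
  by_contra! h
  exact hlast.not_ge (Fin.induction (motive := fun i => σ i ≤ t) h0 h (Fin.last K))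

/-- The tariff `e` is constant on each of the intervals `[σ k, σ (k + 1))`, which partition the
slots `[0, D)`. -/
structure IsPiecewiseConstant {K : ℕ} (σ : Fin (K + 1) → ℕ) (D : ℕ) (e : ℕ → ℚ) : Prop where
  zero : σ 0 = 0
  last : σ (Fin.last K) = D
  monotone : Monotone σ
  eq_of_mem : ∀ k : Fin K, ∀ t t', σ k.castSucc ≤ t → t < σ k.succ → σ k.castSucc ≤ t' →
    t' < σ k.succ → e t = e t'

namespace IsCanonicalOptimal

variable {w : Fin n → ℚ} {e : ℕ → ℚ} {S : Schedule n p D} {K : ℕ} {σ : Fin (K + 1) → ℕ}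
  {a b t y : ℕ}

lemma exists_eq_boundary (hS : IsCanonicalOptimal w e S) (hp : ∀ j, 0 < p j) (hw : ∀ j, 0 ≤ w j)
    (he : IsPiecewiseConstant σ D e) (ht : t ∉ S.utilized) (ht' : t + 1 ∈ S.utilized) :
    ∃ k : Fin K, t + 1 = σ k.castSucc := by
  have htD := lt_of_assign_ne_none (mem_utilized.1 ht')
  obtain ⟨k, hle, hlt⟩ := exists_castSucc_le_lt_succ (he.zero.trans_le (t + 1).zero_le)
    (htD.trans_eq he.last.symm)
  refine ⟨k, hle.antisymm' (not_lt.1 fun hk => ?_)⟩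
  have htariff := hS.tariff_lt_of_idle_lt_utilized hp hw t.lt_succ_self ht ht'
  exact htariff.ne (he.eq_of_mem k _ _ hle hlt (by omega) (by omega))

lemma lastSlot_succ_mem_utilized (hS : IsCanonicalOptimal w e S) (hp : ∀ j, 0 < p j)
    (hw : ∀ j, 0 ≤ w j) (he : IsPiecewiseConstant σ D e)
    (hsplit : ∀ t, a < t → t < b → ¬ IsSplit K σ S t) {j : Fin n} (hj : a ≤ S.lastSlot j)
    (hjy : S.lastSlot j < y) (hy : y ∈ S.utilized) (hyb : y < b) :
    S.lastSlot j + 1 ∈ S.utilized := by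
  by_contra hidle
  obtain ⟨d, hjd, hdy, hd, hnext⟩ := exists_next_of_lt (P := (· ∈ S.utilized)) hjy hy
  have hd_ne : d ≠ S.lastSlot j + 1 := by rintro rfl; exact hidle hd
  obtain ⟨t, rfl⟩ : ∃ t, d = t + 1 := ⟨d - 1, by omega⟩
  obtain ⟨k, hk⟩ := hS.exists_eq_boundary hp hw he (hnext t (by omega) t.lt_succ_self) hd
  exact hsplit (t + 1) (by omega) (by omega)
    ⟨.inl ⟨k, .inl hk⟩, startTime_lt_iff_of_idle hp hS.respectsOrder hjd hnext⟩

lemma mem_utilized_of_lastSlot_eq_succ (hS : IsCanonicalOptimal w e S) (hp : ∀ j, 0 < p j)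
    (hw : ∀ j, 0 ≤ w j) (he : IsPiecewiseConstant σ D e)
    (hsplit : ∀ t, a < t → t < b → ¬ IsSplit K σ S t) {j : Fin n} (hj : S.lastSlot j = t + 1)
    (hat : a ≤ t) (htb : t + 2 < b) : t ∈ S.utilized := by
  by_contra hidle
  obtain ⟨k, hk⟩ := hS.exists_eq_boundary hp hw he hidle (hj ▸ S.lastSlot_mem_utilized (hp j))
  exact hsplit (t + 2) (by omega) htb ⟨.inl ⟨k, .inr (by omega)⟩,
    startTime_lt_iff_of_idle (i := j) hp hS.respectsOrder (by omega) fun u _ _ => by omega⟩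

lemma exists_utilized_idle_succ (hS : IsCanonicalOptimal w e S) (hp : ∀ j, 0 < p j)
    (hw : ∀ j, 0 ≤ w j) (he : IsPiecewiseConstant σ D e) {k : Fin K}
    (hk : PartiallyIn K σ S a b k) :
    ∃ x, σ k.castSucc ≤ x ∧ x + 1 < σ k.succ ∧ a ≤ x ∧ x + 1 < b ∧
      x ∈ S.utilized ∧ x + 1 ∉ S.utilized := by
  obtain ⟨⟨u, hku, huk, hau, _, hu⟩, ⟨v, hkv, hvk, hav, hvb, hv⟩⟩ := hk
  rw [← mem_utilized] at hu
  rw [← notMem_utilized] at hv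
  have hne : u ≠ v := by rintro rfl; exact hv hu
  have huv : u < v := hne.lt_or_gt.resolve_right fun hvu =>
    (hS.tariff_lt_of_idle_lt_utilized hp hw hvu hv hu).ne
      (he.eq_of_mem k u v hku huk hkv hvk)
  obtain ⟨d, hud, hdv, hd, hnext⟩ := exists_next_of_lt (P := (· ∉ S.utilized)) huv hv
  obtain ⟨x, rfl⟩ : ∃ x, d = x + 1 := ⟨d - 1, by omega⟩
  have hx : x ∈ S.utilized := by
    rcases (Nat.lt_succ_iff.1 hud).eq_or_lt with rfl | hux
    · exact hu
    · exact not_not.1 (hnext x hux x.lt_succ_self)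
  exact ⟨x, by omega, by omega, by omega, by omega, hx, hd⟩

lemma not_partiallyIn_of_lt (hS : IsCanonicalOptimal w e S) (hp : ∀ j, 0 < p j)
    (hw : ∀ j, 0 ≤ w j) (he : IsPiecewiseConstant σ D e)
    (hsplit : ∀ t, a < t → t < b → ¬ IsSplit K σ S t) {k₁ k₂ : Fin K} (hlt : k₁ < k₂)
    (hk₁ : PartiallyIn K σ S a b k₁) : ¬ PartiallyIn K σ S a b k₂ := by
  intro hk₂
  obtain ⟨x, hk₁x, hxk₁, hax, _, hx, hx'⟩ := hS.exists_utilized_idle_succ hp hw he hk₁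
  obtain ⟨y, hk₂y, hyk₂, _, hyb, hy, hy'⟩ := hS.exists_utilized_idle_succ hp hw he hk₂
  have hk : σ k₁.succ ≤ σ k₂.castSucc := he.monotone (Fin.succ_le_castSucc_iff.2 hlt)
  have hyD : y + 1 < D := hyk₂.trans_le ((he.monotone (Fin.le_last _)).trans_eq he.last)
  have htariff := hS.tariff_add_lt_of_two_gaps hp (by omega) hx hx' hy hy' hyD
    (fun j hxj hjy => hS.lastSlot_succ_mem_utilized hp hw he hsplit (hax.trans hxj) hjy hy
      (by omega))
    (fun j t hxt hty hj => hS.mem_utilized_of_lastSlot_eq_succ hp hw he hsplit hj (by omega)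
      (by omega))
  have hex := he.eq_of_mem k₁ x (x + 1) hk₁x (by omega) (by omega) hxk₁
  have hey := he.eq_of_mem k₂ y (y + 1) hk₂y (by omega) (by omega) hyk₂
  exact htariff.ne (by rw [hex, hey])

end IsCanonicalOptimal

theorem at_most_one_partial_interval_general {w : Fin n → ℚ} {e : ℕ → ℚ} {S : Schedule n p D}
    {K : ℕ} {σ : Fin (K + 1) → ℕ} {a b : ℕ} (hp : ∀ j, 1 ≤ p j) (hw : ∀ j, 0 ≤ w j)
    (he : IsPiecewiseConstant σ D e) (hS : IsCanonicalOptimal w e S)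
    (hsplit : ∀ t, a < t → t < b → ¬ IsSplit K σ S t) (k₁ k₂ : Fin K)
    (hk₁ : PartiallyIn K σ S a b k₁) (hk₂ : PartiallyIn K σ S a b k₂) : k₁ = k₂ := by
  by_contra hne
  rcases lt_or_gt_of_ne hne with hlt | hgt
  · exact hS.not_partiallyIn_of_lt hp hw he hsplit hlt hk₁ hk₂
  · exact hS.not_partiallyIn_of_lt hp hw he hsplit hgt hk₂ hk₁

/-- In a canonical optimal schedule, each region contains at most one partially
utilized interval. -/
theorem at_most_one_partial_interval (n : ℕ) (p : Fin n → ℕ) (hp : ∀ j, 1 ≤ p j)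
    (w : Fin n → ℚ) (hw : ∀ j, 0 ≤ w j)
    (e : ℕ → ℚ) (he : ∀ t, 0 ≤ e t) (D : ℕ) (hD : ∑ j, p j ≤ D)
    (K : ℕ) (σ : Fin (K+1) → ℕ) (hσ0 : σ 0 = 0) (hσD : σ (Fin.last K) = D)
    (hmono : StrictMono σ) (ec : Fin K → ℚ)
    (hconst : ∀ k : Fin K, ∀ t, σ k.castSucc ≤ t → t < σ k.succ → e t = ec k)
    (S : Schedule n p D) (hord : RespectsOrder S)
    (hopt : ∀ S' : Schedule n p D, RespectsOrder S' → wcost w e S ≤ wcost w e S')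
    (htie : ∀ S' : Schedule n p D, RespectsOrder S' → wcost w e S' = wcost w e S →
      tieVal S ≤ tieVal S')
    (a b : ℕ) (hsa : IsSplit K σ S a) (hsb : IsSplit K σ S b) (hab : a < b)
    (hcons : ∀ t, a < t → t < b → ¬ IsSplit K σ S t) :
    ∀ k₁ k₂ : Fin K, PartiallyIn K σ S a b k₁ → PartiallyIn K σ S a b k₂ → k₁ = k₂ := by
  have he : IsPiecewiseConstant σ D e := ⟨hσ0, hσD, hmono.monotone,
    fun k t t' h₁ h₂ h₁' h₂' => (hconst k t h₁ h₂).trans (hconst k t' h₁' h₂').symm⟩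
  exact at_most_one_partial_interval_general hp hw he ⟨hord, hopt, htie⟩ hcons
end

section
/- Consider the single-machine makespan problem with utilization cost, with P = ∑_j p_j. The minimum over all schedules S of Cmax(S) + E(S), where Cmax(S) = max_j C_j(S), equals the minimum over all P-element subsets U of {0, 1, …, D−1} of the quantity (max U) + 1 + ∑_{t ∈ U} e(t). -/
open Finset

variable {n D : ℕ} {p : Fin n → ℕ}

/-!
Cost depends on a schedule only through its set of utilized slots: every job completes by one plus
the last utilized slot, and the job processed in that slot completes exactly then. Since preemption
is free, the sets of utilized slots are exactly the subsets of `{0, …, D - 1}` of size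
`∑ j, p j`: such a set can be split arbitrarily into blocks of sizes `p j`. Hence the two
minimization problems attain the same values.
-/

theorem exists_isLeast_image {α β : Type*} [LinearOrder β] (f : α → β) {s : Finset α}
    (hs : s.Nonempty) : ∃ c, IsLeast (f '' s) c := by
  classical
  exact ⟨_, by simpa only [coe_image] using (s.image f).isLeast_min' (hs.image f)⟩

theorem exists_card_fiber_eq {α ι : Type*} [Fintype α] [Fintype ι] [DecidableEq ι] (c : ι → ℕ)
    (h : Fintype.card α = ∑ i, c i) : ∃ f : α → ι, ∀ i, #{a | f a = i} = c i := by
  have φ : α ≃ Σ i, Fin (c i) := Fintype.equivOfCardEq (by simp [h])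
  refine ⟨fun a => (φ a).1, fun i => ?_⟩
  calc #{a | (φ a).1 = i}
      = Fintype.card {a // (φ a).1 = i} := (Fintype.card_subtype _).symm
    _ = Fintype.card (Fin (c i)) :=
        Fintype.card_congr ((φ.subtypeEquivOfSubtype (p := (·.1 = i))).trans (Equiv.sigmaSubtype i))
    _ = c i := Fintype.card_fin _

theorem extend_some_eq_some_iff {α β γ : Type*} {g : α → β} (hg : g.Injective) (f : α → γ)
    (b : β) (c : γ) :
    Function.extend g (some ∘ f) (fun _ => none) b = some c ↔ ∃ a, g a = b ∧ f a = c := by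
  by_cases hb : ∃ a, g a = b
  · obtain ⟨a, rfl⟩ := hb
    simp [hg.extend_apply, hg.eq_iff]
  · rw [Function.extend_apply' _ _ _ hb]
    simp [not_exists.1 hb]

namespace Schedule

/-- The slots below the horizon in which some job is processed; `ucost e S` is the total tariff
over this set. -/
def utilizedSlots (S : Schedule n p D) : Finset ℕ :=
  (range D).filter fun t => S.assign t ≠ none

theorem mem_utilizedSlots {S : Schedule n p D} {t : ℕ} :
    t ∈ S.utilizedSlots ↔ ∃ j, S.assign t = some j := by
  rw [utilizedSlots, mem_filter, mem_range, ← Option.ne_none_iff_exists', and_iff_right_iff_imp]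
  exact fun h => not_le.1 fun ht => h (S.beyond t ht)

theorem utilizedSlots_eq_biUnion (S : Schedule n p D) :
    S.utilizedSlots = univ.biUnion (jobSlots S) := by
  ext t
  simp [utilizedSlots, jobSlots, Option.ne_none_iff_exists']

theorem pairwiseDisjoint_jobSlots (S : Schedule n p D) (s : Set (Fin n)) :
    s.PairwiseDisjoint (jobSlots S) := by
  refine fun i _ j _ hij => disjoint_filter.2 fun t _ hi hj => hij ?_
  exact Option.some.inj (hi.symm.trans hj)

theorem card_utilizedSlots (S : Schedule n p D) : #S.utilizedSlots = ∑ j, p j := by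
  rw [utilizedSlots_eq_biUnion, card_biUnion (S.pairwiseDisjoint_jobSlots _)]
  exact sum_congr rfl fun j _ => S.card_slots j

theorem sup_completion_eq_max'_add_one (S : Schedule n p D) (hS : S.utilizedSlots.Nonempty) :
    (univ.sup fun j => completion S j) = S.utilizedSlots.max' hS + 1 := by
  have hjobs : (univ : Finset (Fin n)).Nonempty := by
    rw [utilizedSlots_eq_biUnion] at hS
    exact (biUnion_nonempty.1 hS).imp fun _ => And.left
  calc (univ.sup fun j => completion S j)
      = (univ.sup fun j => (jobSlots S j).sup id) + 1 := (Finset.sup_add hjobs _ 1).symm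
    _ = S.utilizedSlots.sup id + 1 := by rw [utilizedSlots_eq_biUnion, sup_biUnion]
    _ = S.utilizedSlots.max' hS + 1 := by rw [max'_eq_sup', sup'_eq_sup]

/-- The schedule that utilizes exactly the slots in `U` and processes job `f u` in slot `u`. -/
noncomputable def ofLabeling {U : Finset ℕ} (hU : U ⊆ range D) (f : U → Fin n)
    (hf : ∀ j, #{u | f u = j} = p j) : Schedule n p D where
  assign := Function.extend Subtype.val (some ∘ f) fun _ => none
  card_slots j := by
    rw [← hf j, ← card_map (Function.Embedding.subtype (· ∈ U))]
    congr 1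
    ext t
    simp only [mem_filter, extend_some_eq_some_iff Subtype.val_injective, mem_map, mem_univ,
      true_and, Function.Embedding.subtype_apply, and_comm (a := _ = t), and_iff_right_iff_imp]
    rintro ⟨u, -, rfl⟩
    exact hU u.2
  beyond t ht := Function.extend_apply' _ _ _ <| by
    rintro ⟨u, rfl⟩
    exact (mem_range.1 (hU u.2)).not_ge ht

theorem utilizedSlots_ofLabeling {U : Finset ℕ} (hU : U ⊆ range D) (f : U → Fin n)
    (hf : ∀ j, #{u | f u = j} = p j) : (ofLabeling hU f hf).utilizedSlots = U := by
  ext t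
  simp [mem_utilizedSlots, ofLabeling, extend_some_eq_some_iff Subtype.val_injective]

theorem range_utilizedSlots :
    Set.range (utilizedSlots : Schedule n p D → Finset ℕ) =
      (range D).powersetCard (∑ j, p j) := by
  ext U
  simp only [Set.mem_range, mem_coe, mem_powersetCard]
  constructor
  · rintro ⟨S, rfl⟩
    exact ⟨filter_subset _ _, S.card_utilizedSlots⟩
  · rintro ⟨hU, hcard⟩
    obtain ⟨f, hf⟩ := exists_card_fiber_eq p ((Fintype.card_coe U).trans hcard)
    exact ⟨ofLabeling hU f hf, utilizedSlots_ofLabeling hU f hf⟩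

end Schedule

section SlotCost

variable {R : Type*} [AddCommMonoidWithOne R]

/-- The objective of the subset problem, `max U + 1 + ∑ t ∈ U, e t`. As in the theorem, the maximum
of the empty set is read as `0`. -/
def slotCost (e : ℕ → R) (U : Finset ℕ) : R :=
  ((WithBot.unbotD 0 U.max + 1 : ℕ) : R) + ∑ t ∈ U, e t

theorem sup_completion_add_sum_eq_slotCost (e : ℕ → R) (S : Schedule n p D)
    (hS : S.utilizedSlots.Nonempty) :
    ((univ.sup fun j => completion S j : ℕ) : R) + ∑ t ∈ S.utilizedSlots, e t =
      slotCost e S.utilizedSlots := by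
  rw [slotCost, S.sup_completion_eq_max'_add_one hS, ← coe_max' hS, WithBot.unbotD_coe]

end SlotCost

theorem makespan_min_eq_subset_min_general {R : Type*} [AddCommMonoidWithOne R] [LinearOrder R]
    (n : ℕ) (hn : 0 < n) (p : Fin n → ℕ) (hp : ∀ j, 1 ≤ p j)
    (e : ℕ → R) (D : ℕ) (hD : ∑ j, p j ≤ D) :
    ∃ c : R,
      IsLeast {x : R | ∃ S : Schedule n p D,
        x = ((Finset.univ.sup fun j => completion S j : ℕ) : R) + ∑ t ∈ S.utilizedSlots, e t} c ∧
      IsLeast {x : R | ∃ U : Finset ℕ, U ⊆ Finset.range D ∧ U.card = ∑ j, p j ∧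
        x = ((WithBot.unbotD 0 U.max + 1 : ℕ) : R) + ∑ t ∈ U, e t} c := by
  have hne (S : Schedule n p D) : S.utilizedSlots.Nonempty := by
    rw [← card_pos, S.card_utilizedSlots]
    exact sum_pos (fun j _ => hp j) ⟨⟨0, hn⟩, mem_univ _⟩
  obtain ⟨c, hc⟩ := exists_isLeast_image (slotCost e)
    (powersetCard_nonempty_of_le (hD.trans_eq (card_range D).symm))
  refine ⟨c, ?_, ?_⟩
  · rw [← Schedule.range_utilizedSlots, ← Set.range_comp] at hc
    simpa only [sup_completion_add_sum_eq_slotCost e _ (hne _), Set.range, Function.comp_apply,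
      eq_comm] using hc
  · simpa only [slotCost, Set.image, mem_coe, mem_powersetCard, and_assoc, eq_comm] using hc

/-- The minimum of makespan plus utilization cost over all schedules equals the
minimum over all `P`-element subsets `U ⊆ {0, …, D−1}` of `max U + 1 + ∑_{t ∈ U} e(t)`,
where `P = ∑_j p_j`. -/
theorem makespan_min_eq_subset_min (n : ℕ) (hn : 0 < n)
    (p : Fin n → ℕ) (hp : ∀ j, 1 ≤ p j)
    (e : ℕ → ℚ) (he : ∀ t, 0 ≤ e t) (D : ℕ) (hD : ∑ j, p j ≤ D) :
    ∃ c : ℚ,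
      IsLeast {x : ℚ | ∃ S : Schedule n p D,
        x = ((Finset.univ.sup fun j => completion S j : ℕ) : ℚ) + ucost e S} c ∧
      IsLeast {x : ℚ | ∃ U : Finset ℕ, U ⊆ Finset.range D ∧ U.card = ∑ j, p j ∧
        x = ((WithBot.unbotD 0 U.max + 1 : ℕ) : ℚ) + ∑ t ∈ U, e t} c :=
  makespan_min_eq_subset_min_general n hn p hp e D hD
end
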